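/- arXiv:1710.10322 — 2 statements merged into one kernel-verified Lean document; each statement's English description precedes it below -/
import Mathlib

section
/- Let A_1,…,A_g ∈ 𝔽_q^{a×r} and B_1,…,B_g ∈ 𝔽_q^{h×r} define a maximally recoverable (n,r,h,a,q)-local reconstruction code with g = n/r ≥ h local groups. For i ∈ {1,…,g} and S ⊆ {1,…,r} with |S| = a+1, let A_i(S) be the a×(a+1) submatrix of A_i on the columns in S, let A_i(S)^⊥ ∈ 𝔽_q^{a+1} be a nonzero vector with A_i(S)·A_i(S)^⊥ = 0, and set p_{i,S} = B_i(S)·A_i(S)^⊥ ∈ 𝔽_q^h. Then for every choice of h pairwise distinct indices ℓ_1,…,ℓ_h ∈ {1,…,g} and sets S_1,…,S_h ⊆ {1,…,r} each of size a+1, the h×h matrix with columns p_{ℓ_1,S_1},…,p_{ℓ_h,S_h} is invertible. -/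
/-- The parity check matrix of an `(n, r, h, a, q)`-local reconstruction code with `g = n/r`
local groups, given by local-parity matrices `A i` (in block-diagonal position) and
heavy-parity matrices `B i`. Rows are indexed by `(Fin g × Fin a) ⊕ Fin h`
(local parity rows first, then the `h` heavy rows) and columns by `Fin g × Fin r`
(the `i`-th local group consists of the columns with first coordinate `i`). -/
def lrcParityCheck (F : Type) [Field F] (g r a h : ℕ)
    (A : Fin g → Matrix (Fin a) (Fin r) F)
    (B : Fin g → Matrix (Fin h) (Fin r) F) :
    Matrix ((Fin g × Fin a) ⊕ Fin h) (Fin g × Fin r) F :=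
  fun ρ c =>
    Sum.elim (fun p : Fin g × Fin a => if p.1 = c.1 then A p.1 p.2 c.2 else 0)
      (fun j : Fin h => B c.1 j c.2) ρ

/-- `A, B` define a maximally recoverable LRC:  every `a × a` minor of each `A i` is
nonzero (stated: any `a` columns of `A i` are linearly independent), and for every set `E`
of `a * g + h` columns containing at least `a` columns from each local group, the
corresponding columns of the parity check matrix are linearly independent (equivalently,
the square submatrix of the parity check matrix on the columns of `E` is invertible). -/
def IsMRLRC (F : Type) [Field F] (g r a h : ℕ)
    (A : Fin g → Matrix (Fin a) (Fin r) F)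
    (B : Fin g → Matrix (Fin h) (Fin r) F) : Prop :=
  (∀ i : Fin g, ∀ S : Finset (Fin r), S.card = a →
      LinearIndependent F (fun c : {x // x ∈ S} => fun j : Fin a => A i j c.1)) ∧
  (∀ E : Finset (Fin g × Fin r), E.card = a * g + h →
      (∀ i : Fin g, a ≤ (E.filter (fun x => x.1 = i)).card) →
      LinearIndependent F
        (fun c : {x // x ∈ E} => fun ρ => lrcParityCheck F g r a h A B ρ c.1))

/-- There is a maximally recoverable `(n = g * r, r, h, a, q)`-local reconstruction code
with `g` local groups each of size `r`, over the field with `q` elements. -/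
def ExistsMRLRC (g r h a q : ℕ) : Prop :=
  ∃ (F : Type) (_ : Field F) (_ : Fintype F),
    Fintype.card F = q ∧
      ∃ (A : Fin g → Matrix (Fin a) (Fin r) F) (B : Fin g → Matrix (Fin h) (Fin r) F),
        IsMRLRC F g r a h A B

/-!
A linear relation `∑ w k • p (ℓ k, S k) = 0` yields a vector annihilated by the parity check matrix:
put `w k • v k` on the group `ℓ k` and zero on every other group. The local rows vanish because
`v k` is in the kernel of `A (ℓ k)`, the heavy rows by the relation. The support meets the group
`ℓ k` inside `S k`, so it lies in a set of columns with `a + 1` columns in each of the `h` groups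
`ℓ k` and `a` columns in each other group. By maximal recoverability those `a * g + h` columns are
linearly independent, so all the `w k • v k` vanish.
-/

open Finset Function Matrix

section GroupwiseColumns

variable {α β : Type*} [Fintype α]

/-- The erasure pattern meeting the group `i` in `T i`, as a set of columns labelled by pairs
(group, position in the group). -/
def groupwiseColumns (T : α → Finset β) : Finset (α × β) :=
  (univ.sigma T).map (Equiv.sigmaEquivProd α β).toEmbedding

theorem mem_groupwiseColumns {T : α → Finset β} {x : α × β} :
    x ∈ groupwiseColumns T ↔ x.2 ∈ T x.1 := by
  simp [groupwiseColumns]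

theorem card_groupwiseColumns (T : α → Finset β) : #(groupwiseColumns T) = ∑ i, #(T i) := by
  rw [groupwiseColumns, card_map, card_sigma]

theorem card_filter_fst_groupwiseColumns [DecidableEq α] (T : α → Finset β) (i : α) :
    #{x ∈ groupwiseColumns T | x.1 = i} = #(T i) := by
  have fiber_eq : {x ∈ groupwiseColumns T | x.1 = i} = {i} ×ˢ T i := by
    ext ⟨i', c⟩
    simp only [mem_filter, mem_groupwiseColumns, mem_product, mem_singleton]
    grind
  rw [fiber_eq, card_product, card_singleton, one_mul]

end GroupwiseColumns

section Extend

variable {ι α β : Type*} {ℓ : ι → α}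

theorem sum_extend_zero {M : Type*} [AddCommMonoid M] [Fintype ι] [Fintype α] (hℓ : Injective ℓ)
    (f : ι → M) : ∑ i, extend ℓ f (0 : α → M) i = ∑ k, f k :=
  (Fintype.sum_of_injective ℓ hℓ f _ (fun i hi ↦ extend_apply' f _ i hi)
    fun k ↦ (hℓ.extend_apply f _ k).symm).symm

theorem mulVec_extend_zero {m n R : Type*} [Fintype n] [NonUnitalNonAssocSemiring R]
    (hℓ : Injective ℓ) (M : α → Matrix m n R) (u : ι → n → R) (i : α) :
    M i *ᵥ extend ℓ u 0 i = extend ℓ (fun k ↦ M (ℓ k) *ᵥ u k) 0 i := by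
  by_cases hi : ∃ k, ℓ k = i
  · obtain ⟨k, rfl⟩ := hi
    simp only [hℓ.extend_apply]
  · simp only [extend_apply' _ _ _ hi, Pi.zero_apply, mulVec_zero]

variable {S : ι → Finset β} {T₀ : Finset β}

theorem extend_zero_apply_eq_zero_of_notMem {R : Type*} [Zero R] (hℓ : Injective ℓ)
    {u : ι → β → R} (hu : ∀ k, ∀ c ∉ S k, u k c = 0) (i : α) :
    ∀ c ∉ extend ℓ S (fun _ ↦ T₀) i, extend ℓ u 0 i c = 0 := by
  by_cases hi : ∃ k, ℓ k = i
  · obtain ⟨k, rfl⟩ := hi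
    simpa only [hℓ.extend_apply] using hu k
  · simp only [extend_apply' _ _ _ hi, Pi.zero_apply, implies_true]

theorem card_extend {a b : ℕ} (hℓ : Injective ℓ) (hS : ∀ k, #(S k) = a + b) (hT₀ : #T₀ = a)
    (i : α) : #(extend ℓ S (fun _ ↦ T₀) i) = a + extend ℓ (fun _ ↦ b) (0 : α → ℕ) i := by
  by_cases hi : ∃ k, ℓ k = i
  · obtain ⟨k, rfl⟩ := hi
    simp only [hℓ.extend_apply, hS]
  · simp only [extend_apply' _ _ _ hi, hT₀, Pi.zero_apply, add_zero]

theorem sum_card_extend {a b : ℕ} [Fintype ι] [Fintype α] (hℓ : Injective ℓ)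
    (hS : ∀ k, #(S k) = a + b) (hT₀ : #T₀ = a) :
    ∑ i, #(extend ℓ S (fun _ ↦ T₀) i) = Fintype.card α * a + Fintype.card ι * b := by
  simp only [card_extend hℓ hS hT₀, sum_add_distrib, sum_extend_zero hℓ, sum_const, card_univ,
    smul_eq_mul]

end Extend

section MulVec

variable {m n R : Type*} [Fintype n]

theorem sum_mul_eq_mulVec_of_support [NonUnitalNonAssocSemiring R] {s : Finset n} {x : n → R}
    (hx : ∀ c ∉ s, x c = 0) (M : Matrix m n R) (j : m) : ∑ c ∈ s, M j c * x c = (M *ᵥ x) j :=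
  sum_subset (subset_univ s) fun c _ hc ↦ by rw [hx c hc, mul_zero]

theorem eq_zero_of_linearIndepOn_col [CommRing R] {s : Finset n} {x : n → R}
    {M : Matrix m n R} (hM : LinearIndepOn R M.col s) (hx : ∀ c ∉ s, x c = 0)
    (hMx : M *ᵥ x = 0) : x = 0 := by
  have relation : ∑ c ∈ s, x c • M.col c = 0 := by
    ext j
    simp only [Finset.sum_apply, Pi.smul_apply, smul_eq_mul, col_apply, mul_comm (x _),
      sum_mul_eq_mulVec_of_support hx, hMx]
  funext c
  by_cases hc : c ∈ s
  · exact linearIndepOn_finset_iff.1 hM x relation c hc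
  · exact hx c hc

end MulVec

section LRC

variable {F : Type} [Field F] {g r a h : ℕ}
  {A : Fin g → Matrix (Fin a) (Fin r) F} {B : Fin g → Matrix (Fin h) (Fin r) F}

theorem lrcParityCheck_mulVec_inl (x : Fin g × Fin r → F) (i : Fin g) (j : Fin a) :
    (lrcParityCheck F g r a h A B *ᵥ x) (.inl (i, j)) = (A i *ᵥ fun c ↦ x (i, c)) j := by
  simp [mulVec, dotProduct, lrcParityCheck, Fintype.sum_prod_type]

theorem lrcParityCheck_mulVec_inr (x : Fin g × Fin r → F) (j : Fin h) :
    (lrcParityCheck F g r a h A B *ᵥ x) (.inr j) = ∑ i, (B i *ᵥ fun c ↦ x (i, c)) j := by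
  simp [mulVec, dotProduct, lrcParityCheck, Fintype.sum_prod_type]

theorem lrcParityCheck_mulVec_eq_zero {x : Fin g → Fin r → F} (hA : ∀ i, A i *ᵥ x i = 0)
    (hB : ∑ i, B i *ᵥ x i = 0) : lrcParityCheck F g r a h A B *ᵥ uncurry x = 0 := by
  ext (⟨i, j⟩ | j)
  · exact (lrcParityCheck_mulVec_inl _ i j).trans (congrFun (hA i) j)
  · rw [lrcParityCheck_mulVec_inr, ← Finset.sum_apply]
    exact congrFun hB j

namespace IsMRLRC

theorem eq_zero_of_mulVec_eq_zero (hMR : IsMRLRC F g r a h A B) {T : Fin g → Finset (Fin r)}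
    (hT : ∀ i, a ≤ #(T i)) (hcard : ∑ i, #(T i) = a * g + h) {x : Fin g → Fin r → F}
    (hx : ∀ i, ∀ c ∉ T i, x i c = 0) (hA : ∀ i, A i *ᵥ x i = 0) (hB : ∑ i, B i *ᵥ x i = 0) :
    x = 0 := by
  have independent : LinearIndepOn F (lrcParityCheck F g r a h A B).col (groupwiseColumns T) :=
    hMR.2 _ ((card_groupwiseColumns T).trans hcard) fun i ↦
      (hT i).trans_eq (card_filter_fst_groupwiseColumns T i).symm
  have uncurry_eq_zero : uncurry x = 0 :=
    eq_zero_of_linearIndepOn_col independent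
      (fun c hc ↦ hx c.1 c.2 (mem_groupwiseColumns.not.1 hc)) (lrcParityCheck_mulVec_eq_zero hA hB)
  funext i c
  exact congrFun uncurry_eq_zero (i, c)

variable {ι : Type*} [Fintype ι] {ℓ : ι → Fin g} {S : ι → Finset (Fin r)}

theorem eq_zero_of_sum_mulVec_eq_zero (hMR : IsMRLRC F g r a h A B) (hι : Fintype.card ι = h)
    (hℓ : Injective ℓ) (hS : ∀ k, #(S k) = a + 1) {u : ι → Fin r → F}
    (hu : ∀ k, ∀ c ∉ S k, u k c = 0) (hA : ∀ k, A (ℓ k) *ᵥ u k = 0)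
    (hB : ∑ k, B (ℓ k) *ᵥ u k = 0) : u = 0 := by
  funext k
  obtain ⟨T₀, -, hT₀⟩ := exists_subset_card_eq (s := S k) (n := a) (by rw [hS]; omega)
  have T_large (i : Fin g) : a ≤ #(extend ℓ S (fun _ ↦ T₀) i) :=
    (Nat.le_add_right a _).trans_eq (card_extend hℓ hS hT₀ i).symm
  have T_card : ∑ i, #(extend ℓ S (fun _ ↦ T₀) i) = a * g + h := by
    rw [sum_card_extend hℓ hS hT₀, Fintype.card_fin, hι, mul_comm, mul_one]
  have local_rows (i : Fin g) : A i *ᵥ extend ℓ u 0 i = 0 := by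
    simp only [mulVec_extend_zero hℓ, hA]
    exact congrFun (extend_zero ℓ) i
  have heavy_rows : ∑ i, B i *ᵥ extend ℓ u 0 i = 0 := by
    simp only [mulVec_extend_zero hℓ, sum_extend_zero hℓ, hB]
  have extend_eq_zero : extend ℓ u 0 = 0 :=
    hMR.eq_zero_of_mulVec_eq_zero T_large T_card (extend_zero_apply_eq_zero_of_notMem hℓ hu)
      local_rows heavy_rows
  rw [← hℓ.extend_apply u 0 k, extend_eq_zero, Pi.zero_apply, Pi.zero_apply]

theorem linearIndependent_mulVec (hMR : IsMRLRC F g r a h A B) (hι : Fintype.card ι = h)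
    (hℓ : Injective ℓ) (hS : ∀ k, #(S k) = a + 1) {v : ι → Fin r → F} (hv0 : ∀ k, v k ≠ 0)
    (hvsupp : ∀ k, ∀ c ∉ S k, v k c = 0) (hvker : ∀ k, A (ℓ k) *ᵥ v k = 0) :
    LinearIndependent F fun k ↦ B (ℓ k) *ᵥ v k := by
  refine Fintype.linearIndependent_iff.2 fun w hw k ↦ ?_
  have smul_v_eq_zero : (fun k ↦ w k • v k) = 0 :=
    hMR.eq_zero_of_sum_mulVec_eq_zero hι hℓ hS
      (fun k c hc ↦ by rw [Pi.smul_apply, hvsupp k c hc, smul_zero])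
      (fun k ↦ by rw [mulVec_smul, hvker, smul_zero]) (by simpa only [mulVec_smul] using hw)
  exact (smul_eq_zero.1 (congrFun smul_v_eq_zero k)).resolve_right (hv0 k)

end IsMRLRC

end LRC

theorem mrlrc_p_vectors_distinct_groups_full_rank_general
    {F : Type} [Field F] {g r a h : ℕ}
    {A : Fin g → Matrix (Fin a) (Fin r) F} {B : Fin g → Matrix (Fin h) (Fin r) F}
    (hMR : IsMRLRC F g r a h A B)
    {ℓ : Fin h → Fin g} (hℓ : Injective ℓ)
    {S : Fin h → Finset (Fin r)} (hS : ∀ k, #(S k) = a + 1)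
    {v : Fin h → Fin r → F}
    (hv0 : ∀ k, v k ≠ 0)
    (hvsupp : ∀ k, ∀ c ∉ S k, v k c = 0)
    (hvker : ∀ k, ∀ j : Fin a, ∑ c ∈ S k, A (ℓ k) j c * v k c = 0) :
    (Matrix.of fun j k : Fin h ↦ ∑ c ∈ S k, B (ℓ k) j c * v k c).det ≠ 0 := by
  simp only [sum_mul_eq_mulVec_of_support (hvsupp _)] at hvker ⊢
  have independent : LinearIndependent F fun k ↦ B (ℓ k) *ᵥ v k :=
    hMR.linearIndependent_mulVec (Fintype.card_fin h) hℓ hS hv0 hvsupp fun k ↦ funext (hvker k)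
  rw [← isUnit_iff_ne_zero, ← isUnit_iff_isUnit_det, ← linearIndependent_cols_iff_isUnit]
  exact independent

/-- **Claim 3.2.** For a maximally recoverable LRC with `g ≥ h` local groups, the vectors
`p (i, S) = B i (S) · (A i (S))^⊥ ∈ F^h` (for `S ⊆ [r]` of size `a+1`, where `(A i (S))^⊥`
is a nonzero vector in the kernel of the submatrix `A i (S)`, here encoded as a vector `v`
on `Fin r` supported on `S`): for any `h` pairwise distinct group indices `ℓ 1, …, ℓ h`
and sets `S 1, …, S h` of size `a+1`, the `h × h` matrix with columns
`p (ℓ 1, S 1), …, p (ℓ h, S h)` is invertible. -/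
theorem mrlrc_p_vectors_distinct_groups_full_rank
    (F : Type) [Field F] [Fintype F] (g r a h : ℕ) (hgh : h ≤ g)
    (A : Fin g → Matrix (Fin a) (Fin r) F) (B : Fin g → Matrix (Fin h) (Fin r) F)
    (hMR : IsMRLRC F g r a h A B)
    (ℓ : Fin h → Fin g) (hℓ : Function.Injective ℓ)
    (S : Fin h → Finset (Fin r)) (hS : ∀ k, (S k).card = a + 1)
    (v : Fin h → Fin r → F)
    (hv0 : ∀ k, v k ≠ 0)
    (hvsupp : ∀ k, ∀ c ∉ S k, v k c = 0)
    (hvker : ∀ k, ∀ j : Fin a, ∑ c ∈ S k, A (ℓ k) j c * v k c = 0) :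
    (Matrix.of fun j k : Fin h => ∑ c ∈ S k, B (ℓ k) j c * v k c).det ≠ 0 :=
  mrlrc_p_vectors_distinct_groups_full_rank_general hMR hℓ hS hv0 hvsupp hvker
end

section
/- Fix integers a ≥ 0 and h ≥ g ≥ 2 with a ≤ h − 2⌈h/g⌉. There exists a constant c > 0 (depending only on a, g, h) such that for every prime power q and every n divisible by g, if there exists a maximally recoverable (n, n/g, h, a, q)-local reconstruction code with g local groups each of size r = n/g, then q ≥ c · n^{1 + a/⌈h/g⌉}. -/
/-!
Write `t = ⌈h / g⌉` and call `w ∈ F ^ h` covered by a set `T` of `a + t` columns of a local group if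
some combination of the local parities agrees on `T` with the combination of the heavy parities
given by `w`. The vectors covered by `T` form a subspace of codimension `t`, and two such subspaces
intersect in codimension `2t` unless the two sets share `k + a` columns with `k > 0`, when the
intersection is `q ^ k` times larger. If `q` is small compared with `r ^ (1 + a / t)`, the pairs
with `k > 0` are rare enough that, by the second moment method (Chung–Erdős), all but a small
fraction of `F ^ h` is covered in a given group. By a union bound some `w ≠ 0` is then covered in
each of the `g` groups, which yields a nonzero combination of the rows of the parity check matrix
vanishing on `g * (a + t) ≥ a * g + h` columns, at least `a` in each group. This is incompatible
with maximal recoverability.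
-/

open Finset Module
open scoped Matrix

section Counting

theorem sq_sum_card_le_card_biUnion_mul_sum_card_inter {ι α : Type*} [DecidableEq α]
    (s : Finset ι) (K : ι → Finset α) :
    (∑ i ∈ s, #(K i)) ^ 2 ≤ #(s.biUnion K) * ∑ i ∈ s, ∑ j ∈ s, #(K i ∩ K j) := by
  have card_eq (T : Finset α) (hT : T ⊆ s.biUnion K) :
      #T = ∑ w ∈ s.biUnion K, if w ∈ T then 1 else 0 := by
    rw [sum_boole, filter_mem_eq_inter, inter_eq_right.2 hT, Nat.cast_id]
  have first_moment : ∑ i ∈ s, #(K i) = ∑ w ∈ s.biUnion K, ∑ i ∈ s, if w ∈ K i then 1 else 0 := by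
    rw [sum_comm]
    exact sum_congr rfl fun i hi => card_eq _ (subset_biUnion_of_mem K hi)
  have second_moment : ∑ i ∈ s, ∑ j ∈ s, #(K i ∩ K j) =
      ∑ w ∈ s.biUnion K, (∑ i ∈ s, if w ∈ K i then 1 else 0) ^ 2 := by
    simp only [sq, sum_mul_sum]
    rw [← sum_comm_cycle]
    refine sum_congr rfl fun i hi => sum_congr rfl fun j _ => ?_
    rw [card_eq _ (inter_subset_left.trans (subset_biUnion_of_mem K hi))]
    exact sum_congr rfl fun w _ => by simp only [ite_zero_mul_ite_zero, mul_one, mem_inter]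
  rw [first_moment, second_moment]
  exact sq_sum_le_card_mul_sum_sq

theorem card_le_card_add_sum_card_compl {ι V : Type*} [Fintype ι] [Fintype V] [DecidableEq V]
    {U : ι → Finset V} {C : Finset V} (hUC : ∀ w, (∀ i, w ∈ U i) → w ∈ C) :
    Fintype.card V ≤ #C + ∑ i, #(U i)ᶜ := by
  have cover : (univ : Finset V) ⊆ C ∪ univ.biUnion fun i => (U i)ᶜ := by
    intro w _
    simpa using (forall_or_exists_not fun i => w ∈ U i).imp_left (hUC w)
  calc Fintype.card V ≤ #(C ∪ univ.biUnion fun i => (U i)ᶜ) := card_le_card cover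
    _ ≤ #C + #(univ.biUnion fun i => (U i)ᶜ) := card_union_le _ _
    _ ≤ #C + ∑ i, #(U i)ᶜ := by gcongr; exact card_biUnion_le

theorem pow_le_two_pow_mul_factorial_mul_choose {n k : ℕ} (hk : 2 * k ≤ n + 2) :
    n ^ k ≤ 2 ^ k * (k.factorial * n.choose k) :=
  calc n ^ k ≤ (2 * (n + 1 - k)) ^ k := by gcongr; omega
    _ = 2 ^ k * (n + 1 - k) ^ k := mul_pow _ _ _
    _ ≤ 2 ^ k * n.descFactorial k := by gcongr; exact Nat.pow_sub_le_descFactorial n k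
    _ = 2 ^ k * (k.factorial * n.choose k) := by rw [Nat.descFactorial_eq_factorial_mul_choose]

variable {ι : Type*} [Fintype ι] [DecidableEq ι]

theorem card_filter_powersetCard_card_inter_eq_le (S : Finset ι) (m j : ℕ) :
    #{T ∈ powersetCard m univ | #(S ∩ T) = j} ≤ 2 ^ #S * Fintype.card ι ^ (m - j) :=
  calc #{T ∈ powersetCard m univ | #(S ∩ T) = j}
      ≤ #(S.powerset ×ˢ powersetCard (m - j) (univ : Finset ι)) := by
        refine card_le_card_of_injOn (fun T => (S ∩ T, T \ S)) (fun T hT => ?_) ?_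
        · have hcard := card_sdiff_add_card_inter T S
          simp only [coe_filter, mem_powersetCard_univ, Set.mem_ofPred_eq] at hT
          simp only [coe_product, Set.mem_prod, mem_coe, mem_powerset, mem_powersetCard_univ,
            inter_subset_left, true_and]
          rw [inter_comm] at hcard
          omega
        · intro T _ T' _ hTT'
          obtain ⟨hinter, hsdiff⟩ := Prod.mk.inj hTT'
          rw [← sdiff_union_inter T S, ← sdiff_union_inter T' S, hsdiff, inter_comm T, hinter,
            inter_comm S]
    _ ≤ 2 ^ #S * Fintype.card ι ^ (m - j) := by
        rw [card_product, card_powerset, card_powersetCard, card_univ]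
        gcongr
        exact Nat.choose_le_pow _ _

theorem sum_pow_card_inter_tsub_le (S : Finset ι) (q a t : ℕ) :
    ∑ T ∈ powersetCard (a + t) univ, q ^ (#(S ∩ T) - a) ≤
      (Fintype.card ι).choose (a + t) +
        ∑ k ∈ Icc 1 t, 2 ^ #S * Fintype.card ι ^ (t - k) * q ^ k := by
  have pow_le (T : Finset ι) (hT : T ∈ powersetCard (a + t) univ) :
      q ^ (#(S ∩ T) - a) ≤ 1 + ∑ k ∈ Icc 1 t, if #(S ∩ T) = a + k then q ^ k else 0 := by
    have hle : #(S ∩ T) ≤ a + t := mem_powersetCard_univ.1 hT ▸ card_le_card inter_subset_right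
    rcases Nat.eq_zero_or_pos (#(S ∩ T) - a) with hzero | hpos
    · simp [hzero]
    · have hk : #(S ∩ T) - a ∈ Icc 1 t := mem_Icc.2 ⟨hpos, by omega⟩
      have hsingle := single_le_sum (f := fun k => if #(S ∩ T) = a + k then q ^ k else 0)
        (fun _ _ => Nat.zero_le _) hk
      rw [if_pos (by omega)] at hsingle
      omega
  calc ∑ T ∈ powersetCard (a + t) univ, q ^ (#(S ∩ T) - a)
      ≤ ∑ T ∈ powersetCard (a + t) univ,
          (1 + ∑ k ∈ Icc 1 t, if #(S ∩ T) = a + k then q ^ k else 0) := sum_le_sum pow_le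
    _ = (Fintype.card ι).choose (a + t) +
          ∑ k ∈ Icc 1 t, #{T ∈ powersetCard (a + t) univ | #(S ∩ T) = a + k} * q ^ k := by
        rw [sum_add_distrib, sum_const, card_powersetCard, card_univ, smul_eq_mul, mul_one,
          sum_comm]
        simp only [← sum_filter, sum_const, smul_eq_mul]
    _ ≤ _ := by
        gcongr with k
        simpa [Nat.add_sub_add_left] using
          card_filter_powersetCard_card_inter_eq_le S (a + t) (a + k)

end Counting

section LinearAlgebra

theorem finrank_comap_add_finrank {K V W : Type*} [DivisionRing K] [AddCommGroup V] [Module K V]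
    [FiniteDimensional K V] [AddCommGroup W] [Module K W] [FiniteDimensional K W]
    (f : V →ₗ[K] W) (p : Submodule K W) (hfp : LinearMap.range f ⊔ p = ⊤) :
    finrank K (p.comap f) + finrank K W = finrank K V + finrank K p := by
  have hsurj : LinearMap.range (p.mkQ.comp f) = ⊤ := by
    rw [LinearMap.range_comp, p.map_mkQ_eq_top, sup_comm, hfp]
  have hker : LinearMap.ker (p.mkQ.comp f) = p.comap f := by
    rw [LinearMap.ker_comp, p.ker_mkQ]
  have hrank := (p.mkQ.comp f).finrank_range_add_finrank_ker
  have hquot := p.finrank_quotient_add_finrank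
  rw [hsurj, finrank_top, hker] at hrank
  omega

open scoped Classical in
theorem card_filter_mem_submodule {K V : Type*} [DivisionRing K] [Fintype K] [AddCommGroup V]
    [Module K V] [Fintype V] (W : Submodule K V) :
    #{v | v ∈ W} = Fintype.card K ^ finrank K W := by
  rw [← card_eq_pow_finrank (K := K) (V := W), Fintype.card_subtype]

theorem linearIndependent_col_iff_vecMul_surjective {m n F : Type*} [Fintype m] [Finite n]
    [Field F] (M : Matrix m n F) :
    LinearIndependent F M.col ↔ Function.Surjective M.vecMul := by
  classical
  cases nonempty_fintype n
  rw [← Matrix.mulVec_injective_iff, Matrix.vecMul_surjective_iff_exists_left_inverse]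
  constructor
  · intro hM
    obtain ⟨L, hL⟩ := (Matrix.toLin' M).exists_leftInverse_of_injective (LinearMap.ker_eq_bot.2 hM)
    refine ⟨LinearMap.toMatrix' L, ?_⟩
    rw [← LinearMap.toMatrix'_id, ← hL, LinearMap.toMatrix'_comp, LinearMap.toMatrix'_toLin']
  · rintro ⟨L, hL⟩
    exact Function.LeftInverse.injective (g := L.mulVec) fun v => by
      rw [Matrix.mulVec_mulVec, hL, Matrix.one_mulVec]

end LinearAlgebra

section MDS

variable {κ η ι F : Type*} [Field F]

/-- The submatrix of `M` formed by the columns in `T`. -/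
abbrev columnsOn (M : Matrix κ ι F) (T : Finset ι) : Matrix κ T F :=
  M.submatrix id Subtype.val

/-- `M` generates an MDS code: any `Fintype.card κ` of its columns are linearly independent. -/
def IsMDS [Fintype κ] (M : Matrix κ ι F) : Prop :=
  ∀ T : Finset ι, #T = Fintype.card κ → LinearIndependent F (columnsOn M T).col

variable [Fintype κ] [Fintype η] {A : Matrix κ ι F} {B : Matrix η ι F}

theorem exists_vecMul_eq_of_linearIndependent_columnsOn {M : Matrix κ ι F} {T : Finset ι}
    (hT : LinearIndependent F (columnsOn M T).col) (f : ι → F) :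
    ∃ x : κ → F, ∀ c ∈ T, (x ᵥ* M) c = f c := by
  obtain ⟨x, hx⟩ := (linearIndependent_col_iff_vecMul_surjective _).1 hT fun c => f c
  exact ⟨x, fun c hc => congrFun hx ⟨c, hc⟩⟩

theorem linearIndependent_columnsOn_of_forall_exists_vecMul_eq {M : Matrix κ ι F} {T : Finset ι}
    (hT : ∀ f : ι → F, ∃ x : κ → F, ∀ c ∈ T, (x ᵥ* M) c = f c) :
    LinearIndependent F (columnsOn M T).col := by
  refine (linearIndependent_col_iff_vecMul_surjective _).2 fun f => ?_
  obtain ⟨f', rfl⟩ := Subtype.val_injective.surjective_comp_right f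
  obtain ⟨x, hx⟩ := hT f'
  exact ⟨x, funext fun c => hx c c.2⟩

theorem eq_zero_of_linearIndependent_columnsOn {M : Matrix κ ι F} {T : Finset ι}
    (hT : LinearIndependent F (columnsOn M T).col) (hcard : Fintype.card κ ≤ #T) {x : κ → F}
    (hx : ∀ c ∈ T, (x ᵥ* M) c = 0) : x = 0 := by
  have hsurj : Function.Surjective (columnsOn M T).vecMulLinear :=
    (linearIndependent_col_iff_vecMul_surjective _).1 hT
  have hcard_eq : finrank F (κ → F) = finrank F (T → F) := by
    rw [finrank_fintype_fun_eq_card, finrank_fintype_fun_eq_card, Fintype.card_coe]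
    refine hcard.antisymm ?_
    simpa using LinearMap.finrank_le_finrank_of_surjective hsurj
  have hinj := (LinearMap.injective_iff_surjective_of_finrank_eq_finrank hcard_eq).2 hsurj
  exact (map_eq_zero_iff _ hinj).1 <| funext fun c => hx c c.2

theorem IsMDS.exists_vecMul_eq [Fintype ι] (hA : IsMDS A) (hι : Fintype.card κ ≤ Fintype.card ι)
    {T : Finset ι} (hT : #T ≤ Fintype.card κ) (f : ι → F) :
    ∃ u : κ → F, ∀ c ∈ T, (u ᵥ* A) c = f c := by
  obtain ⟨T', hTT', -, hT'⟩ := exists_subsuperset_card_eq (subset_univ T) hT hι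
  obtain ⟨u, hu⟩ := exists_vecMul_eq_of_linearIndependent_columnsOn (hA T' hT') f
  exact ⟨u, fun c hc => hu c (hTT' hc)⟩

theorem IsMDS.eq_zero (hA : IsMDS A) {T : Finset ι} (hT : Fintype.card κ ≤ #T) {u : κ → F}
    (hu : ∀ c ∈ T, (u ᵥ* A) c = 0) : u = 0 := by
  obtain ⟨T', hTT', hT'⟩ := exists_subset_card_eq hT
  exact eq_zero_of_linearIndependent_columnsOn (hA T' hT') hT'.ge fun c hc => hu c (hTT' hc)

/-- The vectors `w` of heavy coefficients for which some combination of local parities (rows of `A`)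
agrees on `T` with the combination `w ᵥ* B` of heavy parities, so that their difference is a dual
codeword vanishing on `T`. -/
def heavyVanishing (A : Matrix κ ι F) (B : Matrix η ι F) (T : Finset ι) : Submodule F (η → F) :=
  (LinearMap.range (columnsOn A T).vecMulLinear).comap (columnsOn B T).vecMulLinear

theorem mem_heavyVanishing {T : Finset ι} {w : η → F} :
    w ∈ heavyVanishing A B T ↔ ∃ u : κ → F, ∀ c ∈ T, (u ᵥ* A) c = (w ᵥ* B) c := by
  simp only [heavyVanishing, Submodule.mem_comap, LinearMap.mem_range, funext_iff, Subtype.forall]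
  rfl

theorem heavyVanishing_inf_eq_union [DecidableEq ι] {S T : Finset ι} (hA : IsMDS A)
    (hST : Fintype.card κ ≤ #(S ∩ T)) :
    heavyVanishing A B S ⊓ heavyVanishing A B T = heavyVanishing A B (S ∪ T) := by
  ext w
  simp only [Submodule.mem_inf, mem_heavyVanishing]
  constructor
  · rintro ⟨⟨u, hu⟩, v, hv⟩
    have huv : u - v = 0 := hA.eq_zero hST fun c hc => by
      rw [mem_inter] at hc
      rw [Matrix.sub_vecMul, Pi.sub_apply, hu c hc.1, hv c hc.2, sub_self]
    obtain rfl := sub_eq_zero.1 huv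
    exact ⟨u, fun c hc => (mem_union.1 hc).elim (hu c) (hv c)⟩
  · rintro ⟨u, hu⟩
    exact ⟨⟨u, fun c hc => hu c (mem_union_left _ hc)⟩, u, fun c hc => hu c (mem_union_right _ hc)⟩

section Finrank

variable [Fintype ι]

theorem finrank_heavyVanishing (hA : IsMDS A) (hAB : IsMDS (A.fromRows B))
    (hι : Fintype.card κ + Fintype.card η ≤ Fintype.card ι) {T : Finset ι}
    (hκT : Fintype.card κ ≤ #T) (hT : #T ≤ Fintype.card κ + Fintype.card η) :
    finrank F (heavyVanishing A B T) + #T = Fintype.card κ + Fintype.card η := by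
  have hinj : Function.Injective (columnsOn A T).vecMulLinear :=
    (injective_iff_map_eq_zero _).2 fun u hu =>
      hA.eq_zero hκT fun c hc => congrFun hu ⟨c, hc⟩
  have hsup : LinearMap.range (columnsOn B T).vecMulLinear ⊔
      LinearMap.range (columnsOn A T).vecMulLinear = ⊤ := by
    refine eq_top_iff.2 fun f _ => ?_
    obtain ⟨f', rfl⟩ := Subtype.val_injective.surjective_comp_right f
    obtain ⟨x, hx⟩ := hAB.exists_vecMul_eq (by simpa using hι) (by simpa using hT) f'
    refine Submodule.mem_sup.2 ⟨_, ⟨x ∘ Sum.inr, rfl⟩, _, ⟨x ∘ Sum.inl, rfl⟩, funext fun c => ?_⟩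
    have hxc := hx c c.2
    rwa [Matrix.vecMul_fromRows, add_comm] at hxc
  have hrank := finrank_comap_add_finrank _ _ hsup
  rw [LinearMap.finrank_range_of_inj hinj, finrank_fintype_fun_eq_card, Fintype.card_coe,
    finrank_fintype_fun_eq_card, finrank_fintype_fun_eq_card] at hrank
  rw [heavyVanishing, hrank, add_comm]

variable [DecidableEq ι] {S T : Finset ι}

theorem heavyVanishing_sup_eq_top (hA : IsMDS A) (hAB : IsMDS (A.fromRows B))
    (hι : Fintype.card κ + Fintype.card η ≤ Fintype.card ι) (hinter : #(S ∩ T) ≤ Fintype.card κ)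
    (hunion : #(S ∪ T) ≤ Fintype.card κ + Fintype.card η) :
    heavyVanishing A B S ⊔ heavyVanishing A B T = ⊤ := by
  refine eq_top_iff.2 fun w _ => ?_
  obtain ⟨p, hp⟩ := hA.exists_vecMul_eq (le_of_add_le_left hι) hinter (w ᵥ* B)
  obtain ⟨x, hx⟩ := hAB.exists_vecMul_eq (by simpa using hι) (by simpa using hunion)
    fun c => if c ∈ S then (p ᵥ* A) c else (w ᵥ* B) c
  simp only [Matrix.vecMul_fromRows, Pi.add_apply] at hx
  refine Submodule.mem_sup.2 ⟨x ∘ Sum.inr, mem_heavyVanishing.2 ⟨p - x ∘ Sum.inl, fun c hc => ?_⟩,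
    w - x ∘ Sum.inr, mem_heavyVanishing.2 ⟨x ∘ Sum.inl, fun c hc => ?_⟩, add_sub_cancel _ _⟩
  · have hxc := hx c (mem_union_left _ hc)
    rw [if_pos hc] at hxc
    rw [Matrix.sub_vecMul, Pi.sub_apply, ← hxc, add_sub_cancel_left]
  · have hxc : (x ∘ Sum.inl ᵥ* A) c + (x ∘ Sum.inr ᵥ* B) c = (w ᵥ* B) c := by
      rw [hx c (mem_union_right _ hc), ite_eq_right_iff]
      exact fun hcS => hp c (mem_inter.2 ⟨hcS, hc⟩)
    rw [Matrix.sub_vecMul, Pi.sub_apply, ← hxc, add_sub_cancel_right]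

theorem finrank_heavyVanishing_inf (hA : IsMDS A) (hAB : IsMDS (A.fromRows B))
    (hι : Fintype.card κ + Fintype.card η ≤ Fintype.card ι)
    (hS : Fintype.card κ ≤ #S) (hT : Fintype.card κ ≤ #T)
    (hunion : #(S ∪ T) ≤ Fintype.card κ + Fintype.card η) :
    finrank F ↥(heavyVanishing A B S ⊓ heavyVanishing A B T) + #S + #T =
      Fintype.card κ + Fintype.card η + max (Fintype.card κ) #(S ∩ T) := by
  have hcard := card_union_add_card_inter S T
  rcases le_total (Fintype.card κ) #(S ∩ T) with hle | hle
  · have hrank := finrank_heavyVanishing hA hAB hι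
      (hS.trans (card_le_card subset_union_left)) hunion
    rw [heavyVanishing_inf_eq_union hA hle, max_eq_right hle]
    omega
  · have hrankS := finrank_heavyVanishing hA hAB hι hS
      ((card_le_card subset_union_left).trans hunion)
    have hrankT := finrank_heavyVanishing hA hAB hι hT
      ((card_le_card subset_union_right).trans hunion)
    have hmod := Submodule.finrank_sup_add_finrank_inf_eq
      (heavyVanishing A B S) (heavyVanishing A B T)
    rw [heavyVanishing_sup_eq_top hA hAB hι hle hunion, finrank_top,
      finrank_fintype_fun_eq_card] at hmod
    rw [max_eq_left hle]
    omega

end Finrank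

end MDS

section HeavyCovered

theorem sum_sum_pow_card_inter_tsub_le {ι : Type*} [Fintype ι] [DecidableEq ι] {q a t : ℕ} {ε : ℝ}
    (hε : 0 ≤ ε) (hι : 2 * (a + t) ≤ Fintype.card ι + 2)
    (hq : ∀ k ∈ Icc 1 t, (q : ℝ) ^ k ≤ ε * (Fintype.card ι : ℝ) ^ (k + a)) :
    (∑ S ∈ powersetCard (a + t) (univ : Finset ι), ∑ T ∈ powersetCard (a + t) univ,
        q ^ (#(S ∩ T) - a) : ℕ) ≤
      (1 + ε * (t * 4 ^ (a + t) * (a + t).factorial)) *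
        ((Fintype.card ι).choose (a + t) : ℝ) ^ 2 := by
  set r := Fintype.card ι
  set M := r.choose (a + t)
  have hM : (r : ℝ) ^ (a + t) ≤ 2 ^ (a + t) * ((a + t).factorial * M) :=
    mod_cast pow_le_two_pow_mul_factorial_mul_choose hι
  have term_le (k : ℕ) (hk : k ∈ Icc 1 t) :
      (2 : ℝ) ^ (a + t) * r ^ (t - k) * q ^ k ≤ ε * (4 ^ (a + t) * (a + t).factorial) * M :=
    calc (2 : ℝ) ^ (a + t) * r ^ (t - k) * q ^ k
        ≤ 2 ^ (a + t) * r ^ (t - k) * (ε * r ^ (k + a)) := by gcongr; exact hq k hk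
      _ = ε * 2 ^ (a + t) * r ^ (a + t) := by
          have hexp : a + t = t - k + (k + a) := by have := (mem_Icc.1 hk).2; omega
          rw [hexp, pow_add (r : ℝ) (t - k)]
          ring
      _ ≤ ε * 2 ^ (a + t) * (2 ^ (a + t) * ((a + t).factorial * M)) := by gcongr
      _ = ε * (4 ^ (a + t) * (a + t).factorial) * M := by
          rw [show (4 : ℝ) = 2 * 2 by norm_num, mul_pow]
          ring
  have row_le (S : Finset ι) (hS : S ∈ powersetCard (a + t) univ) :
      (∑ T ∈ powersetCard (a + t) univ, q ^ (#(S ∩ T) - a) : ℕ) ≤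
        (1 + ε * (t * 4 ^ (a + t) * (a + t).factorial)) * M :=
    calc ((∑ T ∈ powersetCard (a + t) univ, q ^ (#(S ∩ T) - a) : ℕ) : ℝ)
        ≤ M + ∑ k ∈ Icc 1 t, (2 : ℝ) ^ (a + t) * r ^ (t - k) * q ^ k := by
          have hrow := sum_pow_card_inter_tsub_le S q a t
          rw [mem_powersetCard_univ.1 hS] at hrow
          exact_mod_cast hrow
      _ ≤ M + ∑ _k ∈ Icc 1 t, ε * (4 ^ (a + t) * (a + t).factorial) * M :=
          add_le_add_right (sum_le_sum term_le) _
      _ = (1 + ε * (t * 4 ^ (a + t) * (a + t).factorial)) * M := by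
          rw [sum_const, Nat.card_Icc, Nat.add_sub_cancel, nsmul_eq_mul]
          ring
  rw [Nat.cast_sum]
  refine (sum_le_sum row_le).trans_eq ?_
  rw [sum_const, card_powersetCard, card_univ, nsmul_eq_mul]
  ring

variable {κ η ι F : Type*} [Fintype κ] [Fintype η] [Fintype ι] [Field F] [Fintype F]
  {A : Matrix κ ι F} {B : Matrix η ι F} {t : ℕ}

open scoped Classical in
/-- The vectors of heavy coefficients lying in `heavyVanishing A B T` for some `T` of size `m`. -/
noncomputable def heavyCovered (A : Matrix κ ι F) (B : Matrix η ι F) (m : ℕ) : Finset (η → F) :=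
  (powersetCard m univ).biUnion fun T => {w | w ∈ heavyVanishing A B T}

theorem mem_heavyCovered {m : ℕ} {w : η → F} :
    w ∈ heavyCovered A B m ↔ ∃ T : Finset ι, #T = m ∧ w ∈ heavyVanishing A B T := by
  simp [heavyCovered]

theorem sq_choose_mul_le_card_heavyCovered_mul [DecidableEq ι] (hA : IsMDS A)
    (hAB : IsMDS (A.fromRows B)) (hι : Fintype.card κ + Fintype.card η ≤ Fintype.card ι)
    (ht : Fintype.card κ + 2 * t ≤ Fintype.card η) :
    (Fintype.card ι).choose (Fintype.card κ + t) ^ 2 * Fintype.card F ^ Fintype.card η ≤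
      #(heavyCovered A B (Fintype.card κ + t)) *
        ∑ S ∈ powersetCard (Fintype.card κ + t) (univ : Finset ι),
          ∑ T ∈ powersetCard (Fintype.card κ + t) univ,
            Fintype.card F ^ (#(S ∩ T) - Fintype.card κ) := by
  classical
  set a := Fintype.card κ
  set h := Fintype.card η
  set q := Fintype.card F
  let K (T : Finset ι) : Finset (η → F) := {w | w ∈ heavyVanishing A B T}
  have card_K (T : Finset ι) (hT : T ∈ powersetCard (a + t) univ) : #(K T) = q ^ (h - t) := by
    have hT := mem_powersetCard_univ.1 hT
    have hrank := finrank_heavyVanishing (T := T) hA hAB hι (by omega) (by omega)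
    rw [card_filter_mem_submodule]
    congr 1
    omega
  have card_K_inter (S : Finset ι) (hS : S ∈ powersetCard (a + t) univ) (T : Finset ι)
      (hT : T ∈ powersetCard (a + t) univ) :
      #(K S ∩ K T) = q ^ (h - 2 * t) * q ^ (#(S ∩ T) - a) := by
    have hS := mem_powersetCard_univ.1 hS
    have hT := mem_powersetCard_univ.1 hT
    have hunion := card_union_le S T
    have hrank := finrank_heavyVanishing_inf (S := S) (T := T) hA hAB hι
      (by omega) (by omega) (by omega)
    simp only [K, ← filter_and, ← Submodule.mem_inf]
    rw [← pow_add, card_filter_mem_submodule]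
    congr 1
    omega
  have moments := sq_sum_card_le_card_biUnion_mul_sum_card_inter (powersetCard (a + t) univ) K
  rw [sum_congr rfl card_K, sum_const, card_powersetCard, card_univ, smul_eq_mul,
    sum_congr rfl fun S hS => sum_congr rfl (card_K_inter S hS)] at moments
  simp only [← mul_sum] at moments
  refine Nat.le_of_mul_le_mul_left ?_ (pow_pos Fintype.card_pos (h - 2 * t) : 0 < q ^ (h - 2 * t))
  have hpow : (q ^ (h - t)) ^ 2 = q ^ (h - 2 * t) * q ^ h := by
    rw [← pow_mul, ← pow_add]
    congr 1
    omega
  calc q ^ (h - 2 * t) * ((Fintype.card ι).choose (a + t) ^ 2 * q ^ h)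
      = ((Fintype.card ι).choose (a + t) * q ^ (h - t)) ^ 2 := by rw [mul_pow, hpow]; ring
    _ ≤ _ := moments
    _ = _ := mul_left_comm _ _ _

theorem card_compl_heavyCovered_le [DecidableEq η] [DecidableEq F] (hA : IsMDS A)
    (hAB : IsMDS (A.fromRows B)) (hι : Fintype.card κ + Fintype.card η ≤ Fintype.card ι)
    (ht : Fintype.card κ + 2 * t ≤ Fintype.card η) {ε : ℝ} (hε : 0 ≤ ε)
    (hq : ∀ k ∈ Icc 1 t,
      (Fintype.card F : ℝ) ^ k ≤ ε * (Fintype.card ι : ℝ) ^ (k + Fintype.card κ)) :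
    (#(heavyCovered A B (Fintype.card κ + t))ᶜ : ℝ) ≤
      ε * (t * 4 ^ (Fintype.card κ + t) * (Fintype.card κ + t).factorial) *
        (Fintype.card F : ℝ) ^ Fintype.card η := by
  classical
  set m := Fintype.card κ + t with hm
  set U := heavyCovered A B m
  set δ : ℝ := ε * (t * 4 ^ m * m.factorial)
  set M := (Fintype.card ι).choose m
  have hM : (0 : ℝ) < (M : ℝ) ^ 2 := by
    have : 0 < M := Nat.choose_pos (by omega)
    positivity
  have card_space : (Fintype.card (η → F) : ℝ) = (Fintype.card F : ℝ) ^ Fintype.card η :=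
    mod_cast Fintype.card_fun
  have covered : (Fintype.card F : ℝ) ^ Fintype.card η ≤ #U * (1 + δ) := by
    refine le_of_mul_le_mul_left ?_ hM
    calc (M : ℝ) ^ 2 * (Fintype.card F : ℝ) ^ Fintype.card η
        ≤ #U * (∑ S ∈ powersetCard m (univ : Finset ι), ∑ T ∈ powersetCard m univ,
            Fintype.card F ^ (#(S ∩ T) - Fintype.card κ) : ℕ) := by
          exact_mod_cast sq_choose_mul_le_card_heavyCovered_mul hA hAB hι ht
      _ ≤ #U * ((1 + δ) * M ^ 2) := by
          gcongr
          exact sum_sum_pow_card_inter_tsub_le hε (by omega) hq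
      _ = M ^ 2 * (#U * (1 + δ)) := by ring
  have hU : (#U : ℝ) ≤ (Fintype.card F : ℝ) ^ Fintype.card η := by
    rw [← card_space]
    exact_mod_cast card_le_univ U
  have hδ : 0 ≤ δ := by positivity
  rw [card_compl, Nat.cast_sub (card_le_univ U), card_space]
  linarith [mul_le_mul_of_nonneg_left hU hδ]

end HeavyCovered

section LRC

/-- The set of columns of a code with local groups indexed by `ι` that consists of the columns in
`S i` from the `i`-th local group. -/
def columnsInGroups {ι κ : Type*} [Fintype ι] [Fintype κ] [DecidableEq κ] (S : ι → Finset κ) :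
    Finset (ι × κ) :=
  {c | c.2 ∈ S c.1}

section ColumnsInGroups

variable {ι κ : Type*} [Fintype ι] [Fintype κ] [DecidableEq κ] {S S' : ι → Finset κ}

theorem mem_columnsInGroups {c : ι × κ} : c ∈ columnsInGroups S ↔ c.2 ∈ S c.1 := by
  simp only [columnsInGroups, mem_filter_univ]

theorem columnsInGroups_mono (hSS' : ∀ i, S i ⊆ S' i) :
    columnsInGroups S ⊆ columnsInGroups S' :=
  fun c hc => mem_columnsInGroups.2 <| hSS' c.1 <| mem_columnsInGroups.1 hc

theorem card_columnsInGroups (S : ι → Finset κ) : #(columnsInGroups S) = ∑ i, #(S i) := by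
  rw [columnsInGroups, card_filter, Fintype.sum_prod_type]
  simp only [sum_boole, filter_univ_mem, Nat.cast_id]

theorem card_filter_columnsInGroups_fst_eq [DecidableEq ι] (S : ι → Finset κ) (i : ι) :
    #{c ∈ columnsInGroups S | c.1 = i} = #(S i) := by
  have group_eq : ({c ∈ columnsInGroups S | c.1 = i} : Finset (ι × κ)) = {i} ×ˢ S i := by
    ext ⟨j, c⟩
    simp only [mem_filter, mem_columnsInGroups, mem_product, mem_singleton]
    grind
  rw [group_eq, card_product, card_singleton, one_mul]

end ColumnsInGroups

variable {F : Type} [Field F] {g r a h t : ℕ} {A : Fin g → Matrix (Fin a) (Fin r) F}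
  {B : Fin g → Matrix (Fin h) (Fin r) F}

theorem vecMul_lrcParityCheck (x : (Fin g × Fin a) ⊕ Fin h → F) (i : Fin g) (c : Fin r) :
    (x ᵥ* lrcParityCheck F g r a h A B) (i, c) =
      ((fun j => x (.inl (i, j))) ᵥ* A i) c + ((x ∘ .inr) ᵥ* B i) c := by
  simp [Matrix.vecMul, dotProduct, lrcParityCheck, Fintype.sum_prod_type_right, mul_ite]

namespace IsMRLRC

theorem isMDS_local (hMR : IsMRLRC F g r a h A B) (i : Fin g) : IsMDS (A i) :=
  fun T hT => hMR.1 i T (hT.trans (Fintype.card_fin a))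

theorem isMDS_fromRows (hMR : IsMRLRC F g r a h A B) (i : Fin g) :
    IsMDS ((A i).fromRows (B i)) := by
  intro T hT
  rw [Fintype.card_sum, Fintype.card_fin, Fintype.card_fin] at hT
  obtain ⟨R, -, hR⟩ := exists_subset_card_eq (hT ▸ Nat.le_add_right a h : a ≤ #T)
  let S : Fin g → Finset (Fin r) := Function.update (fun _ => R) i T
  have hS (j : Fin g) : #(S j) = a + if j = i then h else 0 := by
    rcases eq_or_ne j i with rfl | hj
    · simp [S, hT]
    · simp [S, hj, hR]
  have hcard : #(columnsInGroups S) = a * g + h := by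
    simp [card_columnsInGroups, hS, sum_add_distrib, mul_comm]
  have hind := hMR.2 (columnsInGroups S) hcard fun j => by
    rw [card_filter_columnsInGroups_fst_eq, hS]
    exact Nat.le_add_right _ _
  refine linearIndependent_columnsOn_of_forall_exists_vecMul_eq fun f => ?_
  obtain ⟨x, hx⟩ := exists_vecMul_eq_of_linearIndependent_columnsOn
    (M := lrcParityCheck F g r a h A B) hind fun c => f c.2
  refine ⟨Sum.elim (fun j => x (.inl (i, j))) (x ∘ .inr), fun c hc => ?_⟩
  have hxc := hx (i, c) (mem_columnsInGroups.2 <| by simpa [S] using hc)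
  rw [vecMul_lrcParityCheck] at hxc
  rwa [Matrix.vecMul_fromRows]

theorem eq_zero_of_forall_mem_heavyVanishing (hMR : IsMRLRC F g r a h A B)
    {S : Fin g → Finset (Fin r)} (hS : ∀ i, a ≤ #(S i)) (hsum : a * g + h ≤ ∑ i, #(S i))
    {w : Fin h → F} (hw : ∀ i, w ∈ heavyVanishing (A i) (B i) (S i)) : w = 0 := by
  choose R hRS hR using fun i => exists_subset_card_eq (hS i)
  obtain ⟨E, hRE, hES, hE⟩ := exists_subsuperset_card_eq (columnsInGroups_mono hRS)
    (n := a * g + h) (by simp [card_columnsInGroups, hR, mul_comm])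
    (by rwa [card_columnsInGroups])
  have hind := hMR.2 E hE fun i => by
    rw [← hR i, ← card_filter_columnsInGroups_fst_eq R i]
    exact card_le_card (filter_subset_filter _ hRE)
  choose u hu using fun i => mem_heavyVanishing.1 (hw i)
  have hx : (Sum.elim (fun p => -u p.1 p.2) w : (Fin g × Fin a) ⊕ Fin h → F) = 0 := by
    refine eq_zero_of_linearIndependent_columnsOn (M := lrcParityCheck F g r a h A B) hind
      (by simp [hE, mul_comm]) fun ⟨i, c⟩ hc => ?_
    have huc := hu i c (mem_columnsInGroups.1 (hES hc))
    have hneg : (fun j => -u i j) = -u i := rfl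
    rw [vecMul_lrcParityCheck]
    simp only [Sum.elim_inl, Sum.elim_comp_inr]
    rw [hneg, Matrix.neg_vecMul, Pi.neg_apply, huc, neg_add_cancel]
  exact funext fun j => congrFun hx (.inr j)

theorem eq_zero_of_forall_mem_heavyCovered [Fintype F] (hMR : IsMRLRC F g r a h A B)
    (hgt : h ≤ g * t) {w : Fin h → F} (hw : ∀ i, w ∈ heavyCovered (A i) (B i) (a + t)) :
    w = 0 := by
  choose S hS hwS using fun i => mem_heavyCovered.1 (hw i)
  refine hMR.eq_zero_of_forall_mem_heavyVanishing (fun i => ?_) ?_ hwS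
  · exact hS i ▸ Nat.le_add_right a t
  · simp only [hS, sum_const, card_univ, Fintype.card_fin, smul_eq_mul]
    linarith

theorem exists_mul_pow_lt_card_pow [Fintype F] (hMR : IsMRLRC F g r a h A B) (hg : 0 < g)
    (hh : 0 < h) (hgt : h ≤ g * t) (hat : a + 2 * t ≤ h) (hr : a + h ≤ r) {ε : ℝ} (hε : 0 ≤ ε)
    (hε_le : ε * (t * 4 ^ (a + t) * (a + t).factorial) ≤ 1 / (2 * g)) :
    ∃ k ∈ Icc 1 t, ε * (r : ℝ) ^ (k + a) < (Fintype.card F : ℝ) ^ k := by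
  classical
  by_contra! hq
  set q := Fintype.card F
  let U (i : Fin g) : Finset (Fin h → F) := heavyCovered (A i) (B i) (a + t)
  have card_compl_le (i : Fin g) : (#(U i)ᶜ : ℝ) ≤ 1 / (2 * g) * (q : ℝ) ^ h := by
    have hcompl := card_compl_heavyCovered_le (t := t) (hMR.isMDS_local i) (hMR.isMDS_fromRows i)
      (by simpa using hr) (by simpa using hat) hε (by simpa using hq)
    simp only [Fintype.card_fin] at hcompl
    refine hcompl.trans ?_
    gcongr
  have sum_card_compl_le : ∑ i, (#(U i)ᶜ : ℝ) ≤ (q : ℝ) ^ h / 2 :=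
    calc ∑ i, (#(U i)ᶜ : ℝ) ≤ ∑ _i : Fin g, 1 / (2 * g) * (q : ℝ) ^ h :=
          sum_le_sum fun i _ => card_compl_le i
      _ = (q : ℝ) ^ h / 2 := by
          rw [sum_const, card_univ, Fintype.card_fin, nsmul_eq_mul]
          field_simp
  have card_le_one_add : (q : ℝ) ^ h ≤ 1 + ∑ i, (#(U i)ᶜ : ℝ) := by
    have hcover := card_le_card_add_sum_card_compl (U := U) (C := {0}) fun w hw =>
      mem_singleton.2 (hMR.eq_zero_of_forall_mem_heavyCovered hgt hw)
    rw [Fintype.card_fun, Fintype.card_fin, card_singleton] at hcover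
    exact_mod_cast hcover
  have four_le : (4 : ℝ) ≤ (q : ℝ) ^ h := by
    have ht : 0 < t := Nat.pos_of_mul_pos_left (hh.trans_le hgt)
    have hq_two : 2 ≤ q := Fintype.one_lt_card
    have : 2 ^ 2 ≤ q ^ h := (Nat.pow_le_pow_left hq_two 2).trans
      (Nat.pow_le_pow_right (by omega) (by omega))
    exact_mod_cast this
  linarith

end IsMRLRC

end LRC

section FieldSize

theorem pow_le_mul_pow_of_le_mul_rpow {x y ε : ℝ} {a k t : ℕ} (hx : 0 ≤ x) (hy : 1 ≤ y)
    (hε : 0 ≤ ε) (hε_one : ε ≤ 1) (hxy : x ≤ ε * y ^ (1 + (a : ℝ) / t)) (hk : k ∈ Icc 1 t) :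
    x ^ k ≤ ε * y ^ (k + a) := by
  obtain ⟨hk_one, hkt⟩ := mem_Icc.1 hk
  have hexp : (1 + (a : ℝ) / t) * k ≤ (k + a : ℕ) := by
    have hka : (k : ℝ) / t * a ≤ a :=
      mul_le_of_le_one_left a.cast_nonneg (div_le_one_of_le₀ (mod_cast hkt) t.cast_nonneg)
    calc (1 + (a : ℝ) / t) * k = k + k / t * a := by ring
      _ ≤ (k + a : ℕ) := by push_cast; gcongr
  calc x ^ k ≤ (ε * y ^ (1 + (a : ℝ) / t)) ^ k := by gcongr
    _ = ε ^ k * y ^ ((1 + (a : ℝ) / t) * k) := by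
        rw [mul_pow, Real.rpow_mul_natCast (zero_le_one.trans hy)]
    _ ≤ ε * y ^ ((k + a : ℕ) : ℝ) := by
        gcongr
        exact pow_le_of_le_one hε hε_one (by omega)
    _ = ε * y ^ (k + a) := by rw [Real.rpow_natCast]

/-- The factor `ε` for which `q ≥ ε · r ^ (1 + a / t)` holds for maximally recoverable codes with
`g` groups of large size `r`, where `t = ⌈h / g⌉`: the largest value for which the second moment
bound leaves at most a `1 / (2g)` fraction of the heavy coefficient vectors uncovered in each
group. -/
noncomputable def fieldSizeConst (a g t : ℕ) : ℝ :=
  (2 * g * (t * 4 ^ (a + t) * (a + t).factorial))⁻¹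

variable {a g t : ℕ}

theorem fieldSizeConst_pos (hg : 0 < g) (ht : 0 < t) : 0 < fieldSizeConst a g t := by
  unfold fieldSizeConst
  positivity

theorem fieldSizeConst_le_one (a g t : ℕ) : fieldSizeConst a g t ≤ 1 := by
  have hcast : (2 * g * (t * 4 ^ (a + t) * (a + t).factorial) : ℝ) =
      (2 * g * (t * 4 ^ (a + t) * (a + t).factorial) : ℕ) := by push_cast; rfl
  rw [fieldSizeConst, hcast]
  exact Nat.cast_inv_le_one _

theorem fieldSizeConst_mul (hg : 0 < g) (ht : 0 < t) :
    fieldSizeConst a g t * (t * 4 ^ (a + t) * (a + t).factorial) = 1 / (2 * g) := by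
  unfold fieldSizeConst
  field_simp

theorem IsMRLRC.fieldSizeConst_mul_rpow_le_card {F : Type} [Field F] [Fintype F] {r h : ℕ}
    {A : Fin g → Matrix (Fin a) (Fin r) F} {B : Fin g → Matrix (Fin h) (Fin r) F}
    (hMR : IsMRLRC F g r a h A B) (hg : 0 < g) (hh : 0 < h) (hgt : h ≤ g * t)
    (hat : a + 2 * t ≤ h) (hr : a + h ≤ r) :
    fieldSizeConst a g t * (r : ℝ) ^ (1 + (a : ℝ) / t) ≤ Fintype.card F := by
  have ht : 0 < t := Nat.pos_of_mul_pos_left (hh.trans_le hgt)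
  obtain ⟨k, hk, hlt⟩ := hMR.exists_mul_pow_lt_card_pow hg hh hgt hat hr
    (fieldSizeConst_pos hg ht).le (fieldSizeConst_mul hg ht).le
  by_contra! hlt_card
  exact hlt.not_ge <| pow_le_mul_pow_of_le_mul_rpow (Nat.cast_nonneg _) (mod_cast by omega)
    (fieldSizeConst_pos hg ht).le (fieldSizeConst_le_one a g t) hlt_card.le hk

theorem IsMRLRC.fieldSizeConst_mul_div_rpow_le_card {F : Type} [Field F] [Fintype F] {r h : ℕ}
    {A : Fin g → Matrix (Fin a) (Fin r) F} {B : Fin g → Matrix (Fin h) (Fin r) F}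
    (hMR : IsMRLRC F g r a h A B) (hg : 0 < g) (hh : 0 < h) (hgt : h ≤ g * t)
    (hat : a + 2 * t ≤ h) :
    fieldSizeConst a g t * ((r : ℝ) / (a + h : ℕ)) ^ (1 + (a : ℝ) / t) ≤ Fintype.card F := by
  have ht : 0 < t := Nat.pos_of_mul_pos_left (hh.trans_le hgt)
  have hκ : 0 ≤ fieldSizeConst a g t := (fieldSizeConst_pos hg ht).le
  rcases le_total (a + h) r with hr | hr
  · refine le_trans ?_ (hMR.fieldSizeConst_mul_rpow_le_card hg hh hgt hat hr)
    gcongr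
    exact div_le_self (Nat.cast_nonneg _) (mod_cast by omega)
  · calc fieldSizeConst a g t * ((r : ℝ) / (a + h : ℕ)) ^ (1 + (a : ℝ) / t)
        ≤ fieldSizeConst a g t := mul_le_of_le_one_right hκ <| Real.rpow_le_one (by positivity)
          (div_le_one_of_le₀ (mod_cast hr) (Nat.cast_nonneg _)) (by positivity)
      _ ≤ 1 := fieldSizeConst_le_one a g t
      _ ≤ Fintype.card F := mod_cast Fintype.card_pos

end FieldSize

theorem mrlrc_field_size_lower_bound_few_groups_small_a_general {a g h : ℕ} (hg : 0 < g)
    (hh : 0 < h) (ha : a + 2 * (h ⌈/⌉ g) ≤ h) :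
    ∃ c : ℝ, 0 < c ∧ ∀ q n : ℕ, g ∣ n → ExistsMRLRC g (n / g) h a q →
      c * (n : ℝ) ^ (1 + (a : ℝ) / (h ⌈/⌉ g : ℕ)) ≤ q := by
  have hgt : h ≤ g * (h ⌈/⌉ g) := le_smul_ceilDiv hg
  have ht : 0 < h ⌈/⌉ g := Nat.pos_of_mul_pos_left (hh.trans_le hgt)
  have hκ : 0 < fieldSizeConst a g (h ⌈/⌉ g) := fieldSizeConst_pos hg ht
  refine ⟨fieldSizeConst a g (h ⌈/⌉ g) / ((g : ℝ) * (a + h : ℕ)) ^ (1 + (a : ℝ) / (h ⌈/⌉ g : ℕ)),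
    by positivity, ?_⟩
  rintro _ _ ⟨r, rfl⟩ hex
  rw [Nat.mul_div_cancel_left r hg] at hex
  obtain ⟨F, _, _, rfl, A, B, hMR⟩ := hex
  rw [div_mul_eq_mul_div, mul_div_assoc, ← Real.div_rpow (by positivity) (by positivity),
    Nat.cast_mul, mul_div_mul_left _ _ (by positivity)]
  exact hMR.fieldSizeConst_mul_div_rpow_le_card hg hh hgt ha

/-- **Proposition A.1.** Fix `a ≥ 0` and `h ≥ g ≥ 2` with `a ≤ h - 2⌈h/g⌉`. There is a
constant `c > 0` (depending only on `a, g, h`) such that every maximally recoverable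
`(n, n/g, h, a, q)`-LRC with `g` local groups each of size `r = n/g` satisfies
`q ≥ c · n^(1 + a/⌈h/g⌉)`.  (Here `⌈h/g⌉ = (h + g - 1) / g` in natural division.) -/
theorem mrlrc_field_size_lower_bound_few_groups_small_a
    (a g h : ℕ) (hg : 2 ≤ g) (hgh : g ≤ h)
    (ha : (a : ℤ) ≤ (h : ℤ) - 2 * (((h + g - 1) / g : ℕ) : ℤ)) :
    ∃ c : ℝ, 0 < c ∧
      ∀ q n : ℕ, IsPrimePow q → g ∣ n →
        ExistsMRLRC g (n / g) h a q →
        c * (n : ℝ) ^ ((1 : ℝ) + (a : ℝ) / (((h + g - 1) / g : ℕ) : ℝ)) ≤ (q : ℝ) := by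
  have hat : a + 2 * (h ⌈/⌉ g) ≤ h := by
    rw [Nat.ceilDiv_eq_add_pred_div]
    omega
  obtain ⟨c, hc, hbound⟩ := mrlrc_field_size_lower_bound_few_groups_small_a_general
    (by omega) (by omega) hat
  exact ⟨c, hc, fun q n _ => hbound q n⟩
end
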